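/- arXiv:math/0108144 — 2 statements merged into one kernel-verified Lean document; each statement's English description precedes it below -/
import Mathlib

section
/- Formal Poincaré Lemma in degree 1: if g₁,…,gₙ ∈ R satisfy ∂ᵢ(gⱼ) = ∂ⱼ(gᵢ) for all 1 ≤ i, j ≤ n, then there exists h ∈ R with gᵢ = ∂ᵢ(h) for all 1 ≤ i ≤ n. -/
noncomputable section

/-- The formal partial derivative `∂ᵢ` on `ℂ[[x₁,…,xₙ]]`, determined by
`coeff α (∂ᵢ g) = (α i + 1) • coeff (α + eᵢ) g`. -/
def pd {σ : Type*} (i : σ) (g : MvPowerSeries σ ℂ) : MvPowerSeries σ ℂ :=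
  fun α => ((α i : ℂ) + 1) * MvPowerSeries.coeff (α + Finsupp.single i 1) g

lemma coeff_pd {σ : Type*} (i : σ) (g : MvPowerSeries σ ℂ) (α : σ →₀ ℕ) :
    MvPowerSeries.coeff α (pd i g) =
      ((α i : ℂ) + 1) * MvPowerSeries.coeff (α + Finsupp.single i 1) g := rfl

/-!
Write `θᵢ = xᵢ ∂ᵢ`, which multiplies the coefficient at `α` by `αᵢ`, so that the Euler operator
`∑ᵢ θᵢ` multiplies it by `|α|`. A closed family `g` satisfies `θⱼ (xᵢ gᵢ) = θᵢ (xⱼ gⱼ)`; hence if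
`h` solves the Euler equation `(∑ᵢ θᵢ) h = ∑ᵢ xᵢ gᵢ`, applying `θⱼ` gives
`(∑ᵢ θᵢ) (θⱼ h) = (∑ᵢ θᵢ) (xⱼ gⱼ)`. Both `θⱼ h` and `xⱼ gⱼ` have no constant term, so they are
equal, and cancelling `xⱼ` leaves `∂ⱼ h = gⱼ`.
-/

section PowerSeriesPrimitive

open MvPowerSeries Finsupp

variable {σ R : Type*}

section Semiring

variable [Semiring R]

lemma coeff_add_single_X_mul (i : σ) (f : MvPowerSeries σ R) (α : σ →₀ ℕ) :
    coeff (α + single i 1) (X i * f) = coeff α f := by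
  rw [add_comm, X_def, coeff_add_monomial_mul, one_mul]

lemma coeff_X_mul_of_apply_eq_zero {i : σ} {α : σ →₀ ℕ} (hα : α i = 0) (f : MvPowerSeries σ R) :
    coeff α (X i * f) = 0 := by
  classical
  rw [X_def, coeff_monomial_mul, if_neg (by simp [hα])]

lemma isLeftRegular_X (i : σ) : IsLeftRegular (X i : MvPowerSeries σ R) := by
  intro f g hfg
  ext α
  rw [← coeff_add_single_X_mul i f α, ← coeff_add_single_X_mul i g α]
  exact congrArg (coeff (α + single i 1)) hfg

end Semiring

section CommSemiring

variable [CommSemiring R]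

lemma coeff_X_mul_pderiv (i : σ) (f : MvPowerSeries σ R) (α : σ →₀ ℕ) :
    coeff α (X i * pderiv R i f) = α i • coeff α f := by
  by_cases hα : α i = 0
  · rw [coeff_X_mul_of_apply_eq_zero hα, hα, zero_smul]
  · obtain ⟨β, rfl⟩ : ∃ β, α = β + single i 1 :=
      ⟨α - single i 1, (tsub_add_cancel_of_le <| by
        simpa only [single_le_iff] using Nat.one_le_iff_ne_zero.mpr hα).symm⟩
    rw [coeff_add_single_X_mul, coeff_pderiv, nsmul_eq_mul, mul_comm]
    simp

lemma X_mul_pderiv_X_mul_comm {i j : σ} {g : σ → MvPowerSeries σ R}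
    (hg : pderiv R i (g j) = pderiv R j (g i)) :
    X j * pderiv R j (X i * g i) = X i * pderiv R i (X j * g j) := by
  obtain rfl | hij := eq_or_ne i j
  · rfl
  · simp only [Derivation.leibniz, pderiv_X_of_ne hij, pderiv_X_of_ne hij.symm, hg, smul_eq_mul,
      mul_zero, add_zero]
    exact mul_left_comm ..

lemma nsmul_coeff_X_mul_comm {i j : σ} {g : σ → MvPowerSeries σ R}
    (hg : pderiv R i (g j) = pderiv R j (g i)) (α : σ →₀ ℕ) :
    α j • coeff α (X i * g i) = α i • coeff α (X j * g j) := by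
  simpa only [coeff_X_mul_pderiv] using congrArg (coeff α) (X_mul_pderiv_X_mul_comm hg)

variable [Module ℚ≥0 R]

/-- The radial primitive `∫₀¹ ∑ᵢ xᵢ gᵢ(t x) dt` of the formal 1-form `∑ᵢ gᵢ dxᵢ`: the power series
without constant term whose image under the Euler operator `∑ᵢ xᵢ ∂ᵢ` is `∑ᵢ xᵢ gᵢ`. The sum over
`α.support` makes sense for infinitely many variables; at `α = 0` it is empty, so that
`(0 : ℚ≥0)⁻¹ = 0` does no harm. -/
def radialPrimitive (g : σ → MvPowerSeries σ R) : MvPowerSeries σ R :=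
  fun α => (α.degree : ℚ≥0)⁻¹ • ∑ i ∈ α.support, coeff α (X i * g i)

lemma coeff_radialPrimitive (g : σ → MvPowerSeries σ R) (α : σ →₀ ℕ) :
    coeff α (radialPrimitive g) =
      (α.degree : ℚ≥0)⁻¹ • ∑ i ∈ α.support, coeff α (X i * g i) := rfl

lemma X_mul_pderiv_radialPrimitive {g : σ → MvPowerSeries σ R} {j : σ}
    (hg : ∀ i, pderiv R i (g j) = pderiv R j (g i)) :
    X j * pderiv R j (radialPrimitive g) = X j * g j := by
  ext α
  obtain rfl | hα := eq_or_ne α 0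
  · rw [coeff_zero_X_mul, coeff_zero_X_mul]
  have hdeg : (α.degree : ℚ≥0) ≠ 0 := Nat.cast_ne_zero.mpr <| (degree_eq_zero_iff α).not.mpr hα
  calc coeff α (X j * pderiv R j (radialPrimitive g))
      = (α.degree : ℚ≥0)⁻¹ • ∑ i ∈ α.support, α j • coeff α (X i * g i) := by
        rw [coeff_X_mul_pderiv, coeff_radialPrimitive, smul_comm, Finset.smul_sum]
    _ = (α.degree : ℚ≥0)⁻¹ • ∑ i ∈ α.support, α i • coeff α (X j * g j) := by
        simp only [nsmul_coeff_X_mul_comm (hg _)]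
    _ = (α.degree : ℚ≥0)⁻¹ • (α.degree : ℚ≥0) • coeff α (X j * g j) := by
        rw [← Finset.sum_smul, ← degree_apply, Nat.cast_smul_eq_nsmul]
    _ = coeff α (X j * g j) := inv_smul_smul₀ hdeg _

theorem pderiv_radialPrimitive {g : σ → MvPowerSeries σ R} {j : σ}
    (hg : ∀ i, pderiv R i (g j) = pderiv R j (g i)) :
    pderiv R j (radialPrimitive g) = g j :=
  isLeftRegular_X j (X_mul_pderiv_radialPrimitive hg)

theorem formal_poincare_deg_one_general (g : σ → MvPowerSeries σ R)
    (hsym : ∀ i j, pderiv R i (g j) = pderiv R j (g i)) :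
    ∃ h : MvPowerSeries σ R, ∀ i, g i = pderiv R i h :=
  ⟨radialPrimitive g, fun j => (pderiv_radialPrimitive fun i => hsym i j).symm⟩

end CommSemiring

lemma pd_eq_pderiv (i : σ) (g : MvPowerSeries σ ℂ) : pd i g = pderiv ℂ i g := by
  ext α
  rw [coeff_pd, coeff_pderiv, mul_comm]

end PowerSeriesPrimitive

/-- **Formal Poincaré Lemma in degree 1**: if `∂ᵢ(gⱼ) = ∂ⱼ(gᵢ)` for all `i, j`, then
there is a formal power series `h` with `gᵢ = ∂ᵢ(h)` for all `i`. -/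
theorem formal_poincare_deg_one (n : ℕ) (hn : 1 ≤ n)
    (g : Fin n → MvPowerSeries (Fin n) ℂ)
    (hsym : ∀ i j : Fin n, pd i (g j) = pd j (g i)) :
    ∃ h : MvPowerSeries (Fin n) ℂ, ∀ i : Fin n, g i = pd i h := by
  simp only [pd_eq_pderiv] at hsym ⊢
  exact formal_poincare_deg_one_general g hsym
end
end

section
/- Formal De Rham Lemma (Koszul exactness): let v = Σ_{i=1}^n ∂ᵢ(f)·eᵢ ∈ R^n, where e₁,…,eₙ is the standard basis of R^n, and for 0 ≤ p ≤ n−1 consider the R-linear map on exterior powers ⋀^p_R(R^n) → ⋀^{p+1}_R(R^n), ω ↦ v ∧ ω. Then the sequence 0 → R = ⋀^0_R(R^n) → ⋀^1_R(R^n) → ⋯ → ⋀^n_R(R^n) given by these maps is exact: the map ⋀^0 → ⋀^1 (i.e. g ↦ g·v) is injective, and for 1 ≤ p ≤ n−1 the kernel of v ∧ − : ⋀^p_R(R^n) → ⋀^{p+1}_R(R^n) equals the image of v ∧ − : ⋀^{p−1}_R(R^n) → ⋀^p_R(R^n). -/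
noncomputable section

/-- The Jacobian ideal `J(f) = ⟨∂₁f,…,∂ₙf⟩` of `f`. -/
def Jf (n : ℕ) (f : MvPowerSeries (Fin n) ℂ) : Ideal (MvPowerSeries (Fin n) ℂ) :=
  Ideal.span (Set.range fun i : Fin n => pd i f)

/-- The maximal ideal `⟨x₁,…,xₙ⟩` of `ℂ[[x₁,…,xₙ]]`. -/
def mx (n : ℕ) : Ideal (MvPowerSeries (Fin n) ℂ) :=
  Ideal.span (Set.range (MvPowerSeries.X : Fin n → MvPowerSeries (Fin n) ℂ))

/-- The Koszul map `v ∧ − : ⋀^p_R(Rⁿ) → ⋀^{p+1}_R(Rⁿ)` for `v = Σᵢ ∂ᵢ(f)·eᵢ`. -/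
def Kmap (n : ℕ) (f : MvPowerSeries (Fin n) ℂ) (p : ℕ) :
    (⋀[MvPowerSeries (Fin n) ℂ]^p (Fin n → MvPowerSeries (Fin n) ℂ)) →ₗ[MvPowerSeries (Fin n) ℂ]
      (⋀[MvPowerSeries (Fin n) ℂ]^(p + 1) (Fin n → MvPowerSeries (Fin n) ℂ)) where
  toFun ω := ⟨ExteriorAlgebra.ι (MvPowerSeries (Fin n) ℂ) (fun i => pd i f) *
      (ω : ExteriorAlgebra (MvPowerSeries (Fin n) ℂ) (Fin n → MvPowerSeries (Fin n) ℂ)), by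
    have h := Submodule.mul_mem_mul
      (LinearMap.mem_range_self
        (ExteriorAlgebra.ι (MvPowerSeries (Fin n) ℂ) (M := Fin n → MvPowerSeries (Fin n) ℂ))
        (fun i => pd i f)) ω.2
    rwa [← pow_succ'] at h⟩
  map_add' a b := Subtype.ext (by push_cast; exact mul_add _ _ _)
  map_smul' c a := Subtype.ext (by push_cast; exact mul_smul_comm c _ _)

/-!
Let `J` be the ideal generated by the components of `v`; for every `r ∈ J` some linear form `d`
has `d v = r`. The interior product with `d` satisfies `d ⌟ (v ∧ ω) = r ω - v ∧ (d ⌟ ω)`, so if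
`v ∧ ω` vanishes modulo an ideal `I`, then `r ω ≡ v ∧ (d ⌟ ω)` modulo `I`. Hence `v ∧ (d ⌟ ω)`
vanishes modulo `I + (r)`, and by induction on the degree `d ⌟ ω ≡ v ∧ ξ` modulo `I + (r)`. Writing
the error as `y + r ζ` with `y` in `I` gives `r (ω - v ∧ ζ) ≡ 0` modulo `I`, and `r` can be
cancelled if it is regular modulo `I`. A regular sequence in `J` thus yields exactness in all
degrees below its length; in a power series ring, the powers of the variables are such a sequence.
-/

section Algebra

open RingTheory.Sequence

variable {R : Type*} [CommRing R]

lemma isSMulRegular_quotient_of_isWeaklyRegular_append_cons {N : Type*} [AddCommGroup N]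
    [Module R N] {rs₁ rs₂ : List R} {r : R} (h : IsWeaklyRegular N (rs₁ ++ r :: rs₂)) :
    IsSMulRegular (N ⧸ Ideal.ofList rs₁ • (⊤ : Submodule R N)) r :=
  ((isWeaklyRegular_cons_iff _ _ _).mp ((isWeaklyRegular_append_iff _ _ _).mp h).2).1

lemma range_dual_eval_pi {κ : Type*} [Finite κ] (v : κ → R) :
    LinearMap.range (Module.Dual.eval R (κ → R) v) = Ideal.span (Set.range v) := by
  classical
  have := Fintype.ofFinite κ
  ext r
  rw [Ideal.mem_span_range_iff_exists_fun]
  constructor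
  · rintro ⟨d, rfl⟩
    refine ⟨fun i ↦ d fun j ↦ if i = j then 1 else 0, ?_⟩
    simp [LinearMap.pi_apply_eq_sum_univ d v, mul_comm]
  · rintro ⟨c, rfl⟩
    exact ⟨∑ i, c i • LinearMap.proj i, by simp⟩

instance moduleFree_exteriorAlgebra (M : Type*) [AddCommGroup M] [Module R M]
    [Module.Free R M] : Module.Free R (ExteriorAlgebra R M) :=
  letI := IsWellOrder.linearOrder (WellOrderingRel (α := Module.Free.ChooseBasisIndex R M))
  .of_basis (Module.Free.chooseBasis R M).ExteriorAlgebra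

lemma isWeaklyRegular_of_flat {rs : List R} (h : IsWeaklyRegular R rs)
    (N : Type*) [AddCommGroup N] [Module R N] [Module.Flat R N] :
    IsWeaklyRegular N rs :=
  ((TensorProduct.rid R N).isWeaklyRegular_congr rs).mp h.isWeaklyRegular_lTensor

end Algebra

section WedgeComplex

open ExteriorAlgebra RingTheory.Sequence

variable {R M : Type*} [CommRing R] [AddCommGroup M] [Module R M]

/-- The interior product `d ⌟ -` by a linear form `d`, i.e. Mathlib's contraction on Clifford
algebras specialised to the zero quadratic form. -/
def interiorProduct (d : Module.Dual R M) : ExteriorAlgebra R M →ₗ[R] ExteriorAlgebra R M :=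
  CliffordAlgebra.contractLeft (Q := (0 : QuadraticForm R M)) d

lemma interiorProduct_ι (d : Module.Dual R M) (v : M) :
    interiorProduct d (ι R v) = algebraMap R (ExteriorAlgebra R M) (d v) :=
  CliffordAlgebra.contractLeft_ι _ d v

lemma interiorProduct_ι_mul (d : Module.Dual R M) (v : M) (ω : ExteriorAlgebra R M) :
    interiorProduct d (ι R v * ω) = d v • ω - ι R v * interiorProduct d ω :=
  CliffordAlgebra.contractLeft_ι_mul (Q := (0 : QuadraticForm R M)) d v ω

lemma interiorProduct_eq_zero (d : Module.Dual R M) {ω : ExteriorAlgebra R M}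
    (hω : ω ∈ ⋀[R]^0 M) : interiorProduct d ω = 0 := by
  rw [exteriorPower, pow_zero, Submodule.mem_one] at hω
  obtain ⟨r, rfl⟩ := hω
  exact CliffordAlgebra.contractLeft_algebraMap _ d r

lemma ι_mul_mem_exteriorPower (v : M) {p : ℕ} {ω : ExteriorAlgebra R M} (hω : ω ∈ ⋀[R]^p M) :
    ι R v * ω ∈ ⋀[R]^(p + 1) M := by
  rw [exteriorPower, pow_succ']
  exact Submodule.mul_mem_mul (LinearMap.mem_range_self _ v) hω

lemma interiorProduct_mem_exteriorPower (d : Module.Dual R M) {p : ℕ} {ω : ExteriorAlgebra R M}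
    (hω : ω ∈ ⋀[R]^(p + 1) M) : interiorProduct d ω ∈ ⋀[R]^p M := by
  induction p generalizing ω with
  | zero =>
    rw [exteriorPower, zero_add, pow_one] at hω
    obtain ⟨v, rfl⟩ := hω
    rw [interiorProduct_ι, exteriorPower, pow_zero]
    exact Submodule.algebraMap_mem _
  | succ p ih =>
    rw [exteriorPower, pow_succ'] at hω
    induction hω using Submodule.mul_induction_on' with
    | mem_mul_mem _ hv η hη =>
      obtain ⟨v, rfl⟩ := hv
      rw [interiorProduct_ι_mul]
      exact sub_mem (Submodule.smul_mem _ _ hη) (ι_mul_mem_exteriorPower v (ih hη))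
    | add ω _ ω' _ hω hω' =>
      rw [map_add]
      exact add_mem hω hω'

lemma exists_mem_exteriorPower_ι_mul_eq (v : M) {p : ℕ} (ζ : ExteriorAlgebra R M)
    (h : ι R v * ζ ∈ ⋀[R]^(p + 1) M) : ∃ ζ' ∈ ⋀[R]^p M, ι R v * ζ' = ι R v * ζ := by
  let 𝒜 : ℕ → Submodule R (ExteriorAlgebra R M) := fun i ↦ ⋀[R]^i M
  have hv : ι R v ∈ 𝒜 1 := by simp [𝒜, exteriorPower]
  refine ⟨DirectSum.decompose 𝒜 ζ p, SetLike.coe_mem _, ?_⟩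
  rw [← DirectSum.coe_decompose_mul_add_of_left_mem 𝒜 hv, add_comm 1 p,
    DirectSum.decompose_of_mem_same 𝒜 h]

/-- The differential `v ∧ -` of the Koszul complex of an element `v` of a module, in degree `p`. -/
def wedgeLeft (v : M) (p : ℕ) : ⋀[R]^p M →ₗ[R] ⋀[R]^(p + 1) M :=
  (LinearMap.mulLeft R (ι R v)).restrict fun _ ↦ ι_mul_mem_exteriorPower v

lemma coe_wedgeLeft (v : M) (p : ℕ) (ω : ⋀[R]^p M) :
    (wedgeLeft v p ω : ExteriorAlgebra R M) = ι R v * ω := rfl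

lemma wedgeLeft_eq_zero_iff {v : M} {p : ℕ} {ω : ⋀[R]^p M} :
    wedgeLeft v p ω = 0 ↔ ι R v * (ω : ExteriorAlgebra R M) = 0 := by
  rw [← coe_wedgeLeft, ZeroMemClass.coe_eq_zero]

lemma wedgeLeft_wedgeLeft (v : M) (p : ℕ) (ω : ⋀[R]^p M) :
    wedgeLeft v (p + 1) (wedgeLeft v p ω) = 0 := by
  rw [wedgeLeft_eq_zero_iff, coe_wedgeLeft, ← mul_assoc, ι_sq_zero, zero_mul]

lemma smul_sub_ι_mul_interiorProduct_mem (d : Module.Dual R M) {v : M} {I : Ideal R}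
    {ω : ExteriorAlgebra R M} (h : ι R v * ω ∈ I • (⊤ : Submodule R (ExteriorAlgebra R M))) :
    d v • ω - ι R v * interiorProduct d ω ∈ I • (⊤ : Submodule R (ExteriorAlgebra R M)) := by
  rw [← interiorProduct_ι_mul]
  exact Submodule.smul_top_le_comap_smul_top I (interiorProduct d) h

lemma mem_smul_top_of_ι_mul_mem {d : Module.Dual R M} {v : M} {I : Ideal R}
    (hreg : IsSMulRegular
      (ExteriorAlgebra R M ⧸ I • (⊤ : Submodule R (ExteriorAlgebra R M))) (d v))
    {ω : ExteriorAlgebra R M} (hω : ω ∈ ⋀[R]^0 M)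
    (h : ι R v * ω ∈ I • (⊤ : Submodule R (ExteriorAlgebra R M))) :
    ω ∈ I • (⊤ : Submodule R (ExteriorAlgebra R M)) := by
  refine mem_of_isSMulRegular_quotient_of_smul_mem hreg ?_
  simpa [interiorProduct_eq_zero d hω] using smul_sub_ι_mul_interiorProduct_mem d h

lemma exists_sub_ι_mul_mem_of_interiorProduct {d : Module.Dual R M} {v : M} {I : Ideal R}
    (hreg : IsSMulRegular
      (ExteriorAlgebra R M ⧸ I • (⊤ : Submodule R (ExteriorAlgebra R M))) (d v))
    {ω ξ : ExteriorAlgebra R M}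
    (h : ι R v * ω ∈ I • (⊤ : Submodule R (ExteriorAlgebra R M)))
    (hξ : interiorProduct d ω - ι R v * ξ ∈
      (I ⊔ Ideal.span {d v}) • (⊤ : Submodule R (ExteriorAlgebra R M))) :
    ∃ ζ, ω - ι R v * ζ ∈ I • (⊤ : Submodule R (ExteriorAlgebra R M)) := by
  rw [Submodule.sup_smul, Submodule.ideal_span_singleton_smul, Submodule.mem_sup] at hξ
  obtain ⟨y, hy, _, ⟨ζ, -, rfl⟩, hyζ⟩ := hξ
  replace hyζ : interiorProduct d ω = y + d v • ζ + ι R v * ξ := by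
    rw [← sub_eq_iff_eq_add, ← hyζ]; rfl
  have hvy : ι R v * y ∈ I • (⊤ : Submodule R (ExteriorAlgebra R M)) :=
    Submodule.smul_top_le_comap_smul_top I (LinearMap.mulLeft R (ι R v)) hy
  have hvη : ι R v * interiorProduct d ω = ι R v * y + d v • (ι R v * ζ) := by
    rw [hyζ, mul_add, mul_add, ← mul_assoc, ι_sq_zero, zero_mul, add_zero, mul_smul_comm]
  refine ⟨ζ, mem_of_isSMulRegular_quotient_of_smul_mem hreg ?_⟩
  have hsplit : d v • (ω - ι R v * ζ) =
      (d v • ω - ι R v * interiorProduct d ω) + ι R v * y := by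
    rw [hvη, smul_sub]; abel
  rw [hsplit]
  exact add_mem (smul_sub_ι_mul_interiorProduct_mem d h) hvy

variable {v : M}

/-- Passing from `ω` to its interior product lowers the degree, at the cost of moving one element
of the sequence into the ideal modulo which everything is considered; hence the split of the
sequence into `rs₁` and `rs₂`. -/
theorem exists_sub_ι_mul_mem_of_isWeaklyRegular {p : ℕ} {rs₁ rs₂ : List R}
    (hreg : IsWeaklyRegular (ExteriorAlgebra R M) (rs₁ ++ rs₂))
    (hv : ∀ r ∈ rs₂, r ∈ LinearMap.range (Module.Dual.eval R M v)) (hp : p < rs₂.length)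
    {ω : ExteriorAlgebra R M} (hω : ω ∈ ⋀[R]^p M)
    (h : ι R v * ω ∈ Ideal.ofList rs₁ • (⊤ : Submodule R (ExteriorAlgebra R M))) :
    ∃ ζ, ω - ι R v * ζ ∈ Ideal.ofList rs₁ • (⊤ : Submodule R (ExteriorAlgebra R M)) := by
  induction p generalizing rs₁ rs₂ ω with
  | zero =>
    obtain ⟨r, rs, rfl⟩ := List.exists_cons_of_length_pos hp
    obtain ⟨d, rfl⟩ := hv r List.mem_cons_self
    have hd := isSMulRegular_quotient_of_isWeaklyRegular_append_cons hreg
    exact ⟨0, by simpa using mem_smul_top_of_ι_mul_mem hd hω h⟩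
  | succ p ih =>
    obtain ⟨r, rs, rfl⟩ := List.exists_cons_of_length_pos (Nat.zero_lt_of_lt hp)
    obtain ⟨d, rfl⟩ := hv r List.mem_cons_self
    have hd := isSMulRegular_quotient_of_isWeaklyRegular_append_cons hreg
    have hideal : Ideal.ofList (rs₁ ++ [d v]) = Ideal.ofList rs₁ ⊔ Ideal.span {d v} := by
      rw [Ideal.ofList_append, Ideal.ofList_singleton]
    have hη : ι R v * interiorProduct d ω ∈
        Ideal.ofList (rs₁ ++ [d v]) • (⊤ : Submodule R (ExteriorAlgebra R M)) := by
      rw [hideal, Submodule.sup_smul, ← sub_sub_cancel (d v • ω) (ι R v * _)]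
      exact sub_mem
        (Submodule.mem_sup_right
          (Submodule.smul_mem_smul (Ideal.mem_span_singleton_self _) Submodule.mem_top))
        (Submodule.mem_sup_left (smul_sub_ι_mul_interiorProduct_mem d h))
    obtain ⟨ξ, hξ⟩ := ih (rs₁ := rs₁ ++ [d v]) (rs₂ := rs) (by simpa using hreg)
      (fun r hr ↦ hv r (List.mem_cons_of_mem _ hr)) (by simpa using hp)
      (interiorProduct_mem_exteriorPower d hω) hη
    exact exists_sub_ι_mul_mem_of_interiorProduct hd h (hideal ▸ hξ)

theorem wedgeLeft_zero_injective {r : R} (hreg : IsSMulRegular (ExteriorAlgebra R M) r)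
    (hv : r ∈ LinearMap.range (Module.Dual.eval R M v)) :
    Function.Injective (wedgeLeft (R := R) v 0) := by
  obtain ⟨d, rfl⟩ := hv
  rw [injective_iff_map_eq_zero]
  intro ω hω
  have h := interiorProduct_ι_mul d v (ω : ExteriorAlgebra R M)
  rw [wedgeLeft_eq_zero_iff.mp hω, interiorProduct_eq_zero d ω.2, map_zero, mul_zero,
    sub_zero] at h
  exact Subtype.ext (hreg.right_eq_zero_of_smul h.symm)

theorem wedgeLeft_exact_of_isWeaklyRegular {rs : List R}
    (hreg : IsWeaklyRegular (ExteriorAlgebra R M) rs)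
    (hv : ∀ r ∈ rs, r ∈ LinearMap.range (Module.Dual.eval R M v)) {p : ℕ}
    (hp : p + 1 < rs.length) :
    Function.Exact (wedgeLeft (R := R) v p) (wedgeLeft v (p + 1)) := by
  intro ω
  constructor
  · intro hω
    rw [wedgeLeft_eq_zero_iff] at hω
    obtain ⟨ζ, hζ⟩ := exists_sub_ι_mul_mem_of_isWeaklyRegular (rs₁ := []) hreg hv hp ω.2
      (by simp [hω])
    replace hζ : (ω : ExteriorAlgebra R M) = ι R v * ζ := by simpa [sub_eq_zero] using hζ
    obtain ⟨ζ', hmem, hζ'⟩ := exists_mem_exteriorPower_ι_mul_eq v ζ (hζ ▸ ω.2)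
    exact ⟨⟨ζ', hmem⟩, Subtype.ext (hζ'.trans hζ.symm)⟩
  · rintro ⟨ζ, rfl⟩
    exact wedgeLeft_wedgeLeft v p ζ

end WedgeComplex

section PowerSeries

open MvPowerSeries RingTheory.Sequence

variable {σ K : Type*} [CommRing K]

lemma coeff_eq_zero_of_mem_ofList_X_pow {N : σ → ℕ} {l : List σ} {g : MvPowerSeries σ K}
    (hg : g ∈ Ideal.ofList (l.map fun j ↦ (X j : MvPowerSeries σ K) ^ N j)) {α : σ →₀ ℕ}
    (hα : ∀ j ∈ l, α j < N j) : coeff α g = 0 := by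
  induction hg using Submodule.span_induction generalizing α with
  | mem x hx =>
    obtain ⟨j, hj, rfl⟩ := List.mem_map.mp hx
    exact X_pow_dvd_iff.mp dvd_rfl α (hα j hj)
  | zero => exact map_zero _
  | add x y _ _ hx hy => rw [map_add, hx hα, hy hα, add_zero]
  | smul r x _ hx =>
    classical
    rw [smul_eq_mul, coeff_mul]
    refine Finset.sum_eq_zero fun q hq ↦ ?_
    have hle : q.2 ≤ α := Finset.HasAntidiagonal.mem_antidiagonal.mp hq ▸ self_le_add_left _ _
    rw [hx fun j hj ↦ (hle j).trans_lt (hα j hj), mul_zero]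

lemma mem_ofList_X_pow_of_coeff_eq_zero {N : σ → ℕ} {l : List σ} {g : MvPowerSeries σ K}
    (hg : ∀ α : σ →₀ ℕ, (∀ j ∈ l, α j < N j) → coeff α g = 0) :
    g ∈ Ideal.ofList (l.map fun j ↦ (X j : MvPowerSeries σ K) ^ N j) := by
  induction l generalizing g with
  | nil =>
    have : g = 0 := MvPowerSeries.ext fun α ↦ hg α (by simp)
    simp [this]
  | cons s l ih =>
    let g' : MvPowerSeries σ K := fun α ↦ if α s < N s then coeff α g else 0
    have coeff_g' (α) : coeff α g' = if α s < N s then coeff α g else 0 := rfl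
    have hdvd : X s ^ N s ∣ g - g' := by
      rw [X_pow_dvd_iff]
      intro α hα
      rw [map_sub, coeff_g', if_pos hα, sub_self]
    have hg' : g' ∈ Ideal.ofList (l.map fun j ↦ (X j : MvPowerSeries σ K) ^ N j) := by
      refine ih fun α hα ↦ ?_
      rw [coeff_g', ite_eq_right_iff]
      exact fun hs ↦ hg α (List.forall_mem_cons.mpr ⟨hs, hα⟩)
    rw [List.map_cons, Ideal.ofList_cons, ← sub_add_cancel g g']
    exact Submodule.add_mem_sup (Ideal.mem_span_singleton.mpr hdvd) hg'

theorem isWeaklyRegular_X_pow (N : σ → ℕ) {l : List σ} (hl : l.Nodup) :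
    IsWeaklyRegular (MvPowerSeries σ K) (l.map fun j ↦ (X j : MvPowerSeries σ K) ^ N j) := by
  induction l using List.reverseRecOn with
  | nil => exact .nil _ _
  | append_singleton l k ih =>
    rw [← List.concat_eq_append, List.nodup_concat] at hl
    rw [List.map_append, List.map_singleton, isWeaklyRegular_append_iff,
      isWeaklyRegular_singleton_iff, isSMulRegular_quotient_iff_mem_of_smul_mem]
    refine ⟨ih hl.2, fun g hg ↦ ?_⟩
    rw [smul_eq_mul, smul_eq_mul, Ideal.mul_top] at hg
    rw [smul_eq_mul, Ideal.mul_top]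
    refine mem_ofList_X_pow_of_coeff_eq_zero fun α hα ↦ ?_
    have hshift : ∀ j ∈ l, (Finsupp.single k (N k) + α) j < N j := by
      intro j hj
      have hkj : k ≠ j := fun h ↦ hl.1 (h ▸ hj)
      simpa [Finsupp.single_eq_of_ne' hkj] using hα j hj
    have hcoeff := coeff_eq_zero_of_mem_ofList_X_pow hg hshift
    rwa [X_pow_eq, coeff_add_monomial_mul, one_mul] at hcoeff

end PowerSeries

theorem formal_de_rham_lemma_general {σ κ K : Type*} [Fintype σ] [Nonempty σ] [Finite κ]
    [CommRing K] (v : κ → MvPowerSeries σ K) (m : ℕ)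
    (hv : Ideal.span (Set.range MvPowerSeries.X) ^ m ≤ Ideal.span (Set.range v)) :
    Function.Injective (wedgeLeft (R := MvPowerSeries σ K) v 0) ∧
    ∀ p : ℕ, p + 1 < Fintype.card σ →
      Function.Exact (wedgeLeft (R := MvPowerSeries σ K) v p) (wedgeLeft v (p + 1)) := by
  let R := MvPowerSeries σ K
  have hreg (l : List σ) (hl : l.Nodup) : RingTheory.Sequence.IsWeaklyRegular
      (ExteriorAlgebra R (κ → R)) (l.map fun j ↦ (MvPowerSeries.X j : R) ^ m) :=
    isWeaklyRegular_of_flat (isWeaklyRegular_X_pow _ hl) _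
  have hX (j : σ) : (MvPowerSeries.X j : R) ^ m ∈
      LinearMap.range (Module.Dual.eval R (κ → R) v) := by
    rw [range_dual_eval_pi]
    exact hv (Ideal.pow_mem_pow (Ideal.subset_span (Set.mem_range_self j)) m)
  constructor
  · obtain ⟨j⟩ := ‹Nonempty σ›
    refine wedgeLeft_zero_injective ?_ (hX j)
    exact (RingTheory.Sequence.isWeaklyRegular_singleton_iff _ _).mp
      (hreg [j] (List.nodup_singleton j))
  · intro p hp
    refine wedgeLeft_exact_of_isWeaklyRegular
      (hreg Finset.univ.toList Finset.univ.nodup_toList) ?_ (by simpa using hp)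
    intro r hr
    obtain ⟨j, -, rfl⟩ := List.mem_map.mp hr
    exact hX j

/-- **Formal De Rham Lemma (Koszul exactness)**: for `f` with an isolated singularity,
the Koszul complex `0 → ⋀^0 → ⋀^1 → ⋯ → ⋀^n` of `v = Σᵢ ∂ᵢ(f)·eᵢ` is exact:
`v ∧ − : ⋀^0 → ⋀^1` is injective and for `1 ≤ p ≤ n−1` the kernel of
`v ∧ − : ⋀^p → ⋀^{p+1}` is the image of `v ∧ − : ⋀^{p-1} → ⋀^p`. -/
theorem formal_de_rham_lemma (n : ℕ) (hn : 1 ≤ n) (f : MvPowerSeries (Fin n) ℂ)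
    (hf0 : MvPowerSeries.constantCoeff f = 0)
    (m : ℕ) (hm : 1 ≤ m) (hiso : mx n ^ m ≤ Jf n f) :
    Function.Injective (Kmap n f 0) ∧
    ∀ p : ℕ, 1 ≤ p + 1 → p + 1 ≤ n - 1 →
      LinearMap.ker (Kmap n f (p + 1)) = LinearMap.range (Kmap n f p) := by
  have : NeZero n := ⟨by omega⟩
  obtain ⟨hinj, hexact⟩ := formal_de_rham_lemma_general (fun i ↦ pd i f) m hiso
  exact ⟨hinj, fun p _ hp ↦ LinearMap.exact_iff.mp (hexact p (by rw [Fintype.card_fin]; omega))⟩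
end
end
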